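/- CLT with predictive centering: suppose (X_n) is G-c.i.d., f and f² are integrable at X_1, sup_n E[C_n²] < ∞ where C_n = n^{-1/2}(f(X_1)+...+f(X_n) − n E[f(X_{n+1})|G_n]), and M_n = (1/n) Σ_{k=1}^n (f(X_k) − k E[f(X_{k+1})|G_k] + (k−1) E[f(X_k)|G_{k-1}])² → σ² a.s. for some real random variable σ². Then (C_n) converges stably with representing measure N(0, σ²). -/

import Mathlib

open MeasureTheory ProbabilityTheory Filter

/-- `(X n)` (indexed from 1) is conditionally identically distributed with respect to `𝒢`. -/
def IsCID {Ω E : Type*} {mΩ : MeasurableSpace Ω} [MeasurableSpace E]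
    (μ : Measure Ω) (𝒢 : Filtration ℕ mΩ) (X : ℕ → Ω → E) : Prop :=
  ∀ (f : E → ℝ), Measurable f → (∃ C, ∀ x, |f x| ≤ C) →
    ∀ n k : ℕ, n < k →
      μ[(fun ω => f (X k ω)) | 𝒢 n] =ᵐ[μ] μ[(fun ω => f (X (n + 1) ω)) | 𝒢 n]

/-- `(W n)` converges stably with representing measure `ω ↦ N(0, L ω)`. -/
def StableGaussLimit {Ω : Type*} {mΩ : MeasurableSpace Ω}
    (μ : Measure Ω) (W : ℕ → Ω → ℝ) (L : Ω → ℝ) : Prop :=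
  ∀ H : Set Ω, MeasurableSet H → μ H ≠ 0 →
    ∀ g : BoundedContinuousFunction ℝ ℝ,
      Tendsto (fun n => ∫ ω, g (W n ω) ∂μ[|H]) atTop
        (nhds (∫ ω, ∫ x, g x ∂(gaussianReal 0 (L ω).toNNReal) ∂μ[|H]))

namespace MCLT

/-- running maximum of `|d k|`, `k < n` -/
noncomputable def mx (d : ℕ → ℝ) : ℕ → ℝ
  | 0 => 0
  | n + 1 => max (mx d n) |d n|

lemma mx_nonneg (d : ℕ → ℝ) (n : ℕ) : 0 ≤ mx d n := by
  induction n with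
  | zero => simp [mx]
  | succ n ih => simp [mx, ih]

lemma mx_mono (d : ℕ → ℝ) : Monotone (mx d) :=
  monotone_nat_of_le_succ fun n => by simp [mx]

lemma abs_le_mx (d : ℕ → ℝ) {k n : ℕ} (h : k < n) : |d k| ≤ mx d n :=
  le_trans (by simp [mx]) (mx_mono d (Nat.succ_le_of_lt h))

lemma mx_sq_le (d : ℕ → ℝ) (n : ℕ) : (mx d n) ^ 2 ≤ ∑ k ∈ Finset.range n, (d k) ^ 2 := by
  induction n with
  | zero => simp [mx]
  | succ n ih =>
    rw [Finset.sum_range_succ, mx]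
    rcases max_cases (mx d n) |d n| with ⟨h, _⟩ | ⟨h, _⟩ <;> rw [h]
    · nlinarith [sq_nonneg (d n)]
    · rw [sq_abs]
      have : 0 ≤ ∑ k ∈ Finset.range n, (d k) ^ 2 := Finset.sum_nonneg fun _ _ => sq_nonneg _
      linarith

lemma mx_le_sum (d : ℕ → ℝ) (n : ℕ) : mx d n ≤ ∑ k ∈ Finset.range n, |d k| := by
  induction n with
  | zero => simp [mx]
  | succ n ih =>
    rw [Finset.sum_range_succ, mx]
    have : 0 ≤ ∑ k ∈ Finset.range n, |d k| := Finset.sum_nonneg fun _ _ => abs_nonneg _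
    refine max_le (by linarith [abs_nonneg (d n)]) (by linarith)

lemma tendsto_last {d : ℕ → ℝ} {v : ℝ}
    (h : Tendsto (fun n : ℕ => (∑ k ∈ Finset.range n, (d k) ^ 2) / n) atTop (nhds v)) :
    Tendsto (fun n : ℕ => (d n) ^ 2 / (n + 1 : ℝ)) atTop (nhds 0) := by
  have h1 := (tendsto_add_atTop_iff_nat 1).2 h
  have h2 : Tendsto (fun n : ℕ => (n : ℝ) / (n + 1)) atTop (nhds 1) :=
    tendsto_natCast_div_add_atTop (1 : ℝ)
  have h3 := h1.sub (h.mul h2)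
  simp only [mul_one, sub_self] at h3
  refine h3.congr' ?_
  filter_upwards [eventually_gt_atTop 0] with n hn
  have : (0 : ℝ) < n := by exact_mod_cast hn
  rw [Finset.sum_range_succ]
  push_cast
  field_simp
  ring

lemma tendsto_mx {d : ℕ → ℝ} {v : ℝ}
    (h : Tendsto (fun n : ℕ => (∑ k ∈ Finset.range n, (d k) ^ 2) / n) atTop (nhds v)) :
    Tendsto (fun n : ℕ => mx d n / Real.sqrt n) atTop (nhds 0) := by
  have hl := tendsto_last h
  rw [Metric.tendsto_atTop]
  intro ε hε
  have := (hl.eventually (gt_mem_nhds (show (0 : ℝ) < (ε / 2) ^ 2 by positivity)))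
  obtain ⟨N, hN⟩ := eventually_atTop.1 this
  have hb : ∀ n ≥ N, mx d n ≤ mx d N + ε / 2 * Real.sqrt n := by
    intro n hn
    induction n, hn using Nat.le_induction with
    | base => have := Real.sqrt_nonneg (N : ℝ); nlinarith
    | succ n hn ih =>
      rw [mx]
      have hs : Real.sqrt n ≤ Real.sqrt ((n + 1 : ℕ) : ℝ) := Real.sqrt_le_sqrt (by push_cast; linarith)
      refine max_le (ih.trans (by gcongr)) ?_
      have h1 := hN n hn
      have hp : (0 : ℝ) < (n : ℝ) + 1 := by positivity
      rw [div_lt_iff₀ hp] at h1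
      have h2 : |d n| ≤ ε / 2 * Real.sqrt ((n + 1 : ℕ) : ℝ) := by
        refine abs_le_of_sq_le_sq ?_ (by positivity)
        rw [mul_pow, Real.sq_sqrt (by positivity)]; push_cast; exact h1.le
      linarith [mx_nonneg d N]
  have h0 : Tendsto (fun n : ℕ => mx d N / Real.sqrt n) atTop (nhds 0) :=
    tendsto_const_nhds.div_atTop (Real.tendsto_sqrt_atTop.comp tendsto_natCast_atTop_atTop)
  have h0' := h0.eventually (gt_mem_nhds (show (0 : ℝ) < ε / 2 by positivity))
  obtain ⟨N', hN'⟩ := eventually_atTop.1 h0'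
  refine ⟨max (max N N') 1, fun n hn => ?_⟩
  have hn1 : N ≤ n := le_trans (le_trans (le_max_left _ _) (le_max_left _ _)) hn
  have hn2 : N' ≤ n := le_trans (le_trans (le_max_right _ _) (le_max_left _ _)) hn
  have hn3 : 1 ≤ n := le_trans (le_max_right _ _) hn
  have hsp : 0 < Real.sqrt n := Real.sqrt_pos.2 (by exact_mod_cast hn3)
  rw [Real.dist_eq, sub_zero, abs_of_nonneg (div_nonneg (mx_nonneg _ _) hsp.le)]
  have := hN' n hn2
  calc mx d n / Real.sqrt n ≤ (mx d N + ε / 2 * Real.sqrt n) / Real.sqrt n := by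
        gcongr; exact hb n hn1
    _ = mx d N / Real.sqrt n + ε / 2 := by field_simp
    _ < ε := by linarith

lemma log_bound {x : ℝ} (hx : |x| ≤ 1 / 2) :
    ‖Complex.log (1 + Complex.I * x) - (Complex.I * x + (x : ℂ) ^ 2 / 2)‖ ≤ |x| * x ^ 2 := by
  have hn : ‖Complex.I * (x : ℂ)‖ = |x| := by simp
  have h := Complex.norm_log_sub_logTaylor_le 2 (z := Complex.I * x) (by rw [hn]; linarith)
  have e : Complex.logTaylor (2 + 1) (Complex.I * x) = Complex.I * x + (x : ℂ) ^ 2 / 2 := by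
    simp [Complex.logTaylor_succ, Complex.logTaylor_zero, mul_pow]
    ring
  rw [e, hn] at h
  refine h.trans ?_
  have h2 : (1 - |x|)⁻¹ ≤ 2 := by
    rw [inv_le_comm₀ (by linarith) (by norm_num)]; linarith
  have h3 : 0 ≤ |x| ^ 3 := by positivity
  have h4 : |x| * x ^ 2 = |x| ^ 3 := by rw [← sq_abs x]; ring
  rw [h4]
  norm_num
  nlinarith

/-- product of `1 + i x_k` versus exponential -/
lemma prod_eq {x : ℕ → ℝ} {n : ℕ} {m : ℝ} (hm : m ≤ 1 / 2) (hx : ∀ k < n, |x k| ≤ m) :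
    ∃ R : ℂ, ‖R‖ ≤ m * ∑ k ∈ Finset.range n, (x k) ^ 2 ∧
      ∏ k ∈ Finset.range n, (1 + Complex.I * (x k : ℂ)) =
        Complex.exp (Complex.I * ((∑ k ∈ Finset.range n, x k : ℝ) : ℂ)
          + ((∑ k ∈ Finset.range n, (x k) ^ 2 : ℝ) : ℂ) / 2 + R) := by
  refine ⟨∑ k ∈ Finset.range n, (Complex.log (1 + Complex.I * (x k))
    - (Complex.I * (x k) + ((x k : ℝ) : ℂ) ^ 2 / 2)), ?_, ?_⟩
  · rw [Finset.mul_sum]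
    refine (norm_sum_le _ _).trans (Finset.sum_le_sum fun k hk => ?_)
    have := hx k (Finset.mem_range.1 hk)
    refine (log_bound (this.trans hm)).trans ?_
    gcongr
  · have : ∀ k ∈ Finset.range n, (1 + Complex.I * (x k : ℂ)) =
        Complex.exp (Complex.log (1 + Complex.I * (x k : ℂ))) := by
      intro k hk
      rw [Complex.exp_log]
      intro h0
      have := congrArg Complex.re h0
      simp at this
    rw [Finset.prod_congr rfl this, ← Complex.exp_sum]
    congr 1
    push_cast
    rw [Finset.sum_sub_distrib, Finset.sum_add_distrib, Finset.mul_sum, Finset.sum_div]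
    ring

lemma limit_one {d : ℕ → ℝ} {v : ℝ}
    (h : Tendsto (fun n : ℕ => (∑ k ∈ Finset.range n, (d k) ^ 2) / n) atTop (nhds v)) :
    Tendsto (fun n : ℕ => Complex.exp (Complex.I * (((∑ k ∈ Finset.range n, d k) / Real.sqrt n : ℝ) : ℂ))
      - (∏ k ∈ Finset.range n, (1 + Complex.I * ((d k / Real.sqrt n : ℝ) : ℂ)))
        * Complex.exp (-(v : ℂ) / 2)) atTop (nhds 0) := by
  have hmx := tendsto_mx h
  have hev : ∀ᶠ n : ℕ in atTop, ∃ R : ℂ,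
      ‖R‖ ≤ (mx d n / Real.sqrt n) * ((∑ k ∈ Finset.range n, (d k) ^ 2) / n) ∧
      ∏ k ∈ Finset.range n, (1 + Complex.I * ((d k / Real.sqrt n : ℝ) : ℂ)) =
        Complex.exp (Complex.I * (((∑ k ∈ Finset.range n, d k) / Real.sqrt n : ℝ) : ℂ)
          + (((∑ k ∈ Finset.range n, (d k) ^ 2) / n : ℝ) : ℂ) / 2 + R) := by
    filter_upwards [hmx.eventually (gt_mem_nhds (show (0 : ℝ) < 1 / 2 by norm_num))] with n hn
    obtain ⟨R, hR, he⟩ := prod_eq (x := fun k => d k / Real.sqrt n) (n := n) hn.le (by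
      intro k hk
      rw [abs_div, abs_of_nonneg (Real.sqrt_nonneg _)]
      gcongr
      exact abs_le_mx d hk)
    have e : ∑ k ∈ Finset.range n, (d k / Real.sqrt n) ^ 2 = (∑ k ∈ Finset.range n, (d k) ^ 2) / n := by
      rw [Finset.sum_div]
      refine Finset.sum_congr rfl fun k _ => ?_
      rw [div_pow, Real.sq_sqrt (Nat.cast_nonneg n)]
    simp only [e, ← Finset.sum_div] at hR he
    exact ⟨R, hR, he⟩
  obtain ⟨N, hN⟩ := eventually_atTop.1 hev
  choose! R hR he using hN
  have hR0 : Tendsto R atTop (nhds 0) := by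
    have hb := hmx.mul h
    rw [zero_mul] at hb
    exact squeeze_zero_norm' (eventually_atTop.2 ⟨N, hR⟩) hb
  have hw : Tendsto (fun n : ℕ => (((∑ k ∈ Finset.range n, (d k) ^ 2) / n : ℝ) : ℂ) / 2 + R n
      - (v : ℂ) / 2) atTop (nhds 0) := by
    have h1 := (((Complex.continuous_ofReal.tendsto v).comp h).div_const 2).add hR0
    have h2 := h1.sub_const ((v : ℂ) / 2)
    simpa using h2
  have hexp := (Complex.continuous_exp.tendsto 0).comp hw
  rw [Complex.exp_zero] at hexp
  have hfin := (tendsto_const_nhds (x := (1 : ℂ))).sub hexp |>.norm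
  simp only [sub_self, norm_zero] at hfin
  refine squeeze_zero_norm' (eventually_atTop.2 ⟨N, fun n hn => ?_⟩) hfin
  rw [he n hn, ← Complex.exp_add, show
    Complex.I * (((∑ k ∈ Finset.range n, d k) / Real.sqrt n : ℝ) : ℂ)
          + (((∑ k ∈ Finset.range n, (d k) ^ 2) / n : ℝ) : ℂ) / 2 + R n + -(v : ℂ) / 2 =
    Complex.I * (((∑ k ∈ Finset.range n, d k) / Real.sqrt n : ℝ) : ℂ) +
      ((((∑ k ∈ Finset.range n, (d k) ^ 2) / n : ℝ) : ℂ) / 2 + R n - (v : ℂ) / 2) by ring,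
    Complex.exp_add, ← mul_one_sub, norm_mul, mul_comm Complex.I, Complex.norm_exp_ofReal_mul_I, one_mul]
  rfl

lemma limit_t {d : ℕ → ℝ} {v : ℝ} (t : ℝ)
    (h : Tendsto (fun n : ℕ => (∑ k ∈ Finset.range n, (d k) ^ 2) / n) atTop (nhds v)) :
    Tendsto (fun n : ℕ => Complex.exp (Complex.I * ((t * ((∑ k ∈ Finset.range n, d k) / Real.sqrt n) : ℝ) : ℂ))
      - (∏ k ∈ Finset.range n, (1 + Complex.I * ((t * (d k / Real.sqrt n) : ℝ) : ℂ)))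
        * ((Real.exp (-(t ^ 2 * v) / 2) : ℝ) : ℂ)) atTop (nhds 0) := by
  have h' : Tendsto (fun n : ℕ => (∑ k ∈ Finset.range n, (t * d k) ^ 2) / n) atTop (nhds (t ^ 2 * v)) := by
    refine (h.const_mul (t ^ 2)).congr fun n => ?_
    simp only [mul_pow, ← Finset.mul_sum, mul_div_assoc]
  refine (limit_one h').congr fun n => ?_
  simp only [← Finset.mul_sum, mul_div_assoc]
  push_cast
  rfl

/-- truncated product -/
noncomputable def PP (t c : ℝ) (n : ℕ) (d : ℕ → ℝ) : ℕ → ℂ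
  | 0 => 1
  | k + 1 => PP t c n d k + (if ∑ j ∈ Finset.range k, (d j) ^ 2 ≤ c * n then PP t c n d k else 0)
      * (Complex.I * ((t * (d k / Real.sqrt n) : ℝ) : ℂ))

lemma norm_factor (x : ℝ) : ‖1 + Complex.I * (x : ℂ)‖ ≤ Real.exp (x ^ 2 / 2) := by
  have h1 : ‖1 + Complex.I * (x : ℂ)‖ ^ 2 = 1 + x ^ 2 := by
    rw [← Complex.normSq_eq_norm_sq, Complex.normSq_apply]; simp; ring
  have h2 : Real.exp (x ^ 2 / 2) ^ 2 = Real.exp (x ^ 2) := by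
    rw [← Real.exp_nat_mul]; congr 1; push_cast; ring
  have h3 := Real.add_one_le_exp (x ^ 2)
  exact le_of_sq_le_sq (by rw [h1, h2]; linarith) (Real.exp_pos _).le

lemma PP_norm_aux (t c : ℝ) (n : ℕ) (d : ℕ → ℝ) (k : ℕ)
    (h : ∑ j ∈ Finset.range k, (d j) ^ 2 ≤ c * n) :
    ‖PP t c n d k‖ ≤ Real.exp (t ^ 2 * ((∑ j ∈ Finset.range k, (d j) ^ 2) / n) / 2) := by
  induction k with
  | zero => simp [PP]
  | succ k ih =>
    have hk : ∑ j ∈ Finset.range k, (d j) ^ 2 ≤ c * n := by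
      rw [Finset.sum_range_succ] at h
      nlinarith [sq_nonneg (d k)]
    rw [PP, if_pos hk, ← mul_one_add, norm_mul, Finset.sum_range_succ]
    refine (mul_le_mul (ih hk) (norm_factor _) (norm_nonneg _) (Real.exp_pos _).le).trans ?_
    rw [← Real.exp_add]
    apply le_of_eq
    congr 1
    rw [mul_pow, div_pow, Real.sq_sqrt (Nat.cast_nonneg n)]
    ring

lemma PP_norm_le (t c : ℝ) (hc : 0 ≤ c) (n : ℕ) (d : ℕ → ℝ) (k : ℕ)
    (h : ∑ j ∈ Finset.range k, (d j) ^ 2 ≤ c * n) :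
    ‖PP t c n d k‖ ≤ Real.exp (t ^ 2 * c / 2) := by
  refine (PP_norm_aux t c n d k h).trans ?_
  gcongr
  rcases Nat.eq_zero_or_pos n with rfl | hn
  · simpa using hc
  · rw [div_le_iff₀ (by exact_mod_cast hn)]; exact h

lemma PP_bound (t c : ℝ) (hc : 0 ≤ c) (n : ℕ) (d : ℕ → ℝ) (k : ℕ) (hk : k ≤ n) :
    ‖PP t c n d k‖ ≤ Real.exp (t ^ 2 * c / 2) * (1 + |t| * (mx d n / Real.sqrt n)) := by
  have hm : 0 ≤ |t| * (mx d n / Real.sqrt n) :=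
    mul_nonneg (abs_nonneg _) (div_nonneg (mx_nonneg _ _) (Real.sqrt_nonneg _))
  induction k with
  | zero =>
    have : 1 ≤ Real.exp (t ^ 2 * c / 2) := Real.one_le_exp (by positivity)
    simp only [PP, norm_one]
    nlinarith
  | succ k ih =>
    rw [PP]
    split_ifs with hh
    · rw [← mul_one_add, norm_mul]
      refine mul_le_mul (PP_norm_le t c hc n d k hh) ?_ (norm_nonneg _) (Real.exp_pos _).le
      refine (norm_add_le _ _).trans ?_
      rw [norm_one, norm_mul, Complex.norm_I, one_mul, Complex.norm_real, Real.norm_eq_abs, abs_mul,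
        abs_div, abs_of_nonneg (Real.sqrt_nonneg (n : ℝ))]
      gcongr
      exact abs_le_mx d hk
    · simpa using ih (by omega)

lemma PP_eq_prod (t c : ℝ) (n : ℕ) (d : ℕ → ℝ) (k : ℕ)
    (h : ∑ j ∈ Finset.range k, (d j) ^ 2 ≤ c * n) :
    PP t c n d k = ∏ j ∈ Finset.range k, (1 + Complex.I * ((t * (d j / Real.sqrt n) : ℝ) : ℂ)) := by
  induction k with
  | zero => simp [PP]
  | succ k ih =>
    have hk : ∑ j ∈ Finset.range k, (d j) ^ 2 ≤ c * n := by
      rw [Finset.sum_range_succ] at h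
      nlinarith [sq_nonneg (d k)]
    rw [PP, if_pos hk, ← mul_one_add, Finset.prod_range_succ, ih hk]

lemma PP_limit {d : ℕ → ℝ} {v : ℝ} (t c : ℝ) (hv : v < c)
    (h : Tendsto (fun n : ℕ => (∑ k ∈ Finset.range n, (d k) ^ 2) / n) atTop (nhds v)) :
    Tendsto (fun n : ℕ => Complex.exp (Complex.I * ((t * ((∑ k ∈ Finset.range n, d k) / Real.sqrt n) : ℝ) : ℂ))
      - PP t c n d n * ((Real.exp (-(t ^ 2 * v) / 2) : ℝ) : ℂ)) atTop (nhds 0) := by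
  refine (limit_t t h).congr' ?_
  filter_upwards [h.eventually (gt_mem_nhds hv), eventually_gt_atTop 0] with n hn hn0
  rw [PP_eq_prod]
  rw [div_lt_iff₀ (by exact_mod_cast hn0)] at hn
  exact hn.le

/-- for fixed `k`, `PP t c n d k → 1`. -/
lemma PP_fixed (d : ℕ → ℝ) (t c : ℝ) (k : ℕ) :
    Tendsto (fun n : ℕ => PP t c n d k) atTop (nhds 1) := by
  induction k with
  | zero => simp [PP]
  | succ k ih =>
    have h0 : Tendsto (fun n : ℕ => d k / Real.sqrt n) atTop (nhds 0) :=
      tendsto_const_nhds.div_atTop (Real.tendsto_sqrt_atTop.comp tendsto_natCast_atTop_atTop)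
    have h1 := (h0.const_mul t).abs
    have h2 := (ih.norm).mul h1
    simp only [mul_zero, abs_zero] at h2
    have h3 : Tendsto (fun n : ℕ => (if ∑ j ∈ Finset.range k, (d j) ^ 2 ≤ c * n then PP t c n d k else 0)
      * (Complex.I * ((t * (d k / Real.sqrt n) : ℝ) : ℂ))) atTop (nhds 0) := by
      refine squeeze_zero_norm (fun n => ?_) h2
      rw [norm_mul, norm_mul, Complex.norm_I, one_mul, Complex.norm_real, Real.norm_eq_abs]
      gcongr
      split_ifs <;> simp
    simpa [PP] using ih.add h3

section Meas

variable {Ω : Type*} {mΩ : MeasurableSpace Ω}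

lemma gDCT (μ : Measure Ω) [IsProbabilityMeasure μ] {Y : ℕ → Ω → ℂ} {m : ℕ → Ω → ℝ} {B B' : ℝ}
    (hB : 0 ≤ B) (hB' : 0 ≤ B')
    (hY : ∀ n, AEStronglyMeasurable (Y n) μ)
    (hm : ∀ n, Integrable (m n) μ) (hm0 : ∀ n ω, 0 ≤ m n ω)
    (hml : Tendsto (fun n => ∫ ω, m n ω ∂μ) atTop (nhds 0))
    (hYb : ∀ n, ∀ᵐ ω ∂μ, ‖Y n ω‖ ≤ B + B' * m n ω)
    (hYl : ∀ᵐ ω ∂μ, Tendsto (fun n => Y n ω) atTop (nhds 0)) :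
    Tendsto (fun n => ∫ ω, Y n ω ∂μ) atTop (nhds 0) := by
  have hmin : ∀ n, AEStronglyMeasurable (fun ω => min ‖Y n ω‖ B) μ := fun n =>
    (hY n).norm.inf aestronglyMeasurable_const
  have hminb : ∀ n, ∀ᵐ ω ∂μ, ‖min ‖Y n ω‖ B‖ ≤ B := fun n => Eventually.of_forall fun ω => by
    rw [Real.norm_eq_abs, abs_of_nonneg (le_min (norm_nonneg _) hB)]; exact min_le_right _ _
  have h1 : Tendsto (fun n => ∫ ω, min ‖Y n ω‖ B ∂μ) atTop (nhds (∫ _, (0 : ℝ) ∂μ)) := by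
    refine tendsto_integral_of_dominated_convergence (fun _ => B) hmin (integrable_const _) hminb ?_
    filter_upwards [hYl] with ω hω
    have := hω.norm.min (tendsto_const_nhds (x := B))
    simpa [hB] using this
  rw [integral_zero] at h1
  have h2 := h1.add (hml.const_mul B')
  simp only [mul_zero, add_zero] at h2
  refine squeeze_zero_norm (fun n => ?_) h2
  have hmi : Integrable (fun ω => min ‖Y n ω‖ B) μ := Integrable.of_bound (hmin n) B (hminb n)
  have hYi : Integrable (Y n) μ := by
    refine Integrable.mono' ((integrable_const B).add ((hm n).const_mul B')) (hY n) ?_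
    exact hYb n
  refine (norm_integral_le_integral_norm _).trans ?_
  rw [← integral_const_mul, ← integral_add hmi ((hm n).const_mul B')]
  refine integral_mono_ae hYi.norm (hmi.add ((hm n).const_mul B')) ?_
  filter_upwards [hYb n] with ω hω
  have := mul_nonneg hB' (hm0 n ω)
  rcases min_cases ‖Y n ω‖ B with ⟨h, _⟩ | ⟨h, _⟩ <;> rw [h] <;> linarith

lemma tendsto_of_approx {a : ℕ → ℂ} {l : ℂ}
    (h : ∀ ε > (0 : ℝ), ∃ (b : ℕ → ℂ) (l' : ℂ), Tendsto b atTop (nhds l') ∧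
      (∀ᶠ n in atTop, ‖a n - b n‖ ≤ ε) ∧ ‖l - l'‖ ≤ ε) : Tendsto a atTop (nhds l) := by
  rw [Metric.tendsto_nhds]
  intro ε hε
  obtain ⟨b, l', hb, hab, hl⟩ := h (ε / 4) (by positivity)
  filter_upwards [hab, Metric.tendsto_nhds.1 hb (ε / 4) (by positivity)] with n h1 h2
  rw [dist_eq_norm] at h2 ⊢
  calc ‖a n - l‖ = ‖(a n - b n) + (b n - l') - (l - l')‖ := by congr 1; ring
    _ ≤ ‖a n - b n‖ + ‖b n - l'‖ + ‖l - l'‖ :=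
      (norm_sub_le _ _).trans (by gcongr; exact norm_add_le _ _)
    _ < ε := by linarith

lemma orth_real (μ : Measure Ω) [IsProbabilityMeasure μ] {m : MeasurableSpace Ω} (hm : m ≤ mΩ)
    {A D : Ω → ℝ} (hA : StronglyMeasurable[m] A) (hD : Integrable D μ)
    (hAD : Integrable (fun ω => A ω * D ω) μ) (h0 : μ[D | m] =ᵐ[μ] 0) :
    ∫ ω, A ω * D ω ∂μ = 0 := by
  have h := condExp_mul_of_stronglyMeasurable_left (μ := μ) hA hAD hD
  have h1 := integral_condExp (μ := μ) (f := A * D) hm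
  have : ∫ ω, A ω * D ω ∂μ = ∫ ω, (A * D) ω ∂μ := rfl
  rw [this, ← h1]
  have h2 : μ[A * D | m] =ᵐ[μ] 0 := by
    filter_upwards [h, h0] with ω h3 h4
    rw [h3]; simp [h4]
  rw [integral_congr_ae h2]; simp

lemma int_zero (μ : Measure Ω) {F : Ω → ℂ} (hF : Integrable F μ)
    (h1 : ∫ ω, (F ω).re ∂μ = 0) (h2 : ∫ ω, (F ω).im ∂μ = 0) : ∫ ω, F ω ∂μ = 0 := by
  apply Complex.ext
  · have := integral_re (𝕜 := ℂ) hF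
    exact this.symm.trans h1
  · have := integral_im (𝕜 := ℂ) hF
    exact this.symm.trans h2

lemma orth (μ : Measure Ω) [IsProbabilityMeasure μ] {m : MeasurableSpace Ω} (hm : m ≤ mΩ)
    {A : Ω → ℂ} {D : Ω → ℝ} (hA : Measurable[m] A) (hD : Integrable D μ)
    (hAD : Integrable (fun ω => A ω * (D ω : ℂ)) μ) (h0 : μ[D | m] =ᵐ[μ] 0) :
    ∫ ω, A ω * (D ω : ℂ) ∂μ = 0 := by
  have hre : StronglyMeasurable[m] (fun ω => (A ω).re) :=
    (Complex.measurable_re.comp hA).stronglyMeasurable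
  have him : StronglyMeasurable[m] (fun ω => (A ω).im) :=
    (Complex.measurable_im.comp hA).stronglyMeasurable
  have h1 := orth_real μ hm hre hD (by simpa using hAD.re) h0
  have h2 := orth_real μ hm him hD (by simpa using hAD.im) h0
  exact int_zero μ hAD (by simpa using h1) (by simpa using h2)

lemma mx_measurable {d : ℕ → Ω → ℝ} (hd : ∀ k, Measurable (d k)) (n : ℕ) :
    Measurable (fun ω => mx (fun k => d k ω) n) := by
  induction n with
  | zero => simp [mx]
  | succ n ih => simpa [mx] using ih.max (hd n).abs

lemma PP_measurable {𝒢 : Filtration ℕ mΩ} {d : ℕ → Ω → ℝ} (hd : ∀ k, Measurable[𝒢 (k + 1)] (d k))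
    (t c : ℝ) (n k : ℕ) : Measurable[𝒢 k] (fun ω => PP t c n (fun k => d k ω) k) := by
  induction k with
  | zero => exact measurable_const
  | succ k ih =>
    have ih' := ih.mono (𝒢.mono (Nat.le_succ k)) le_rfl
    have hs : Measurable[𝒢 (k + 1)] (fun ω => ∑ j ∈ Finset.range k, (d j ω) ^ 2) := by
      refine Finset.measurable_fun_sum _ fun j hj => ?_
      have := (hd j).mono (𝒢.mono (show j + 1 ≤ k + 1 by have := Finset.mem_range.1 hj; omega)) le_rfl
      exact this.pow_const 2
    simp only [PP]
    refine ih'.add (Measurable.mul (Measurable.ite (measurableSet_le hs measurable_const) ih'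
      measurable_const) (measurable_const.mul ?_))
    exact Complex.measurable_ofReal.comp (((hd k).div_const _).const_mul t)

lemma PP_A_measurable {𝒢 : Filtration ℕ mΩ} {d : ℕ → Ω → ℝ} (hd : ∀ k, Measurable[𝒢 (k + 1)] (d k))
    (t c : ℝ) (n k : ℕ) : Measurable[𝒢 k] (fun ω =>
      if ∑ j ∈ Finset.range k, (d j ω) ^ 2 ≤ c * n then PP t c n (fun k => d k ω) k else 0) := by
  have hs : Measurable[𝒢 k] (fun ω => ∑ j ∈ Finset.range k, (d j ω) ^ 2) := by
    refine Finset.measurable_fun_sum _ fun j hj => ?_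
    have := (hd j).mono (𝒢.mono (show j + 1 ≤ k by have := Finset.mem_range.1 hj; omega)) le_rfl
    exact this.pow_const 2
  exact Measurable.ite (measurableSet_le hs measurable_const) (PP_measurable hd t c n k)
      measurable_const

lemma mx_integrable (μ : Measure Ω) {d : ℕ → Ω → ℝ} (hd : ∀ k, Measurable (d k))
    (hI : ∀ k, Integrable (d k) μ) (n : ℕ) :
    Integrable (fun ω => mx (fun k => d k ω) n / Real.sqrt n) μ := by
  refine Integrable.div_const ?_ _
  refine Integrable.mono' (integrable_finsetSum (Finset.range n) fun k _ => (hI k).abs)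
    (mx_measurable hd n).aestronglyMeasurable (Eventually.of_forall fun ω => ?_)
  rw [Real.norm_eq_abs, abs_of_nonneg (mx_nonneg _ _)]
  exact mx_le_sum _ n

lemma mx_L1 (μ : Measure Ω) [IsProbabilityMeasure μ] {d : ℕ → Ω → ℝ} (hd : ∀ k, Measurable (d k))
    (hL2 : ∀ k, MemLp (d k) 2 μ) {K : ℝ}
    (hK : ∀ n : ℕ, ∫ ω, ∑ k ∈ Finset.range n, (d k ω) ^ 2 ∂μ ≤ K * n) {σ : Ω → ℝ}
    (hM : ∀ᵐ ω ∂μ, Tendsto (fun n : ℕ => (∑ k ∈ Finset.range n, (d k ω) ^ 2) / n) atTop (nhds (σ ω))) :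
    Tendsto (fun n : ℕ => ∫ ω, mx (fun k => d k ω) n / Real.sqrt n ∂μ) atTop (nhds 0) := by
  have hI : ∀ k, Integrable (d k) μ := fun k => (hL2 k).integrable (by norm_num)
  have hmi := mx_integrable μ hd hI
  have hm0 : ∀ (n : ℕ) ω, 0 ≤ mx (fun k => d k ω) n / Real.sqrt n := fun n ω =>
    div_nonneg (mx_nonneg _ _) (Real.sqrt_nonneg _)
  have hVi : ∀ n : ℕ, Integrable (fun ω => (∑ k ∈ Finset.range n, (d k ω) ^ 2) / n) μ := fun n =>
    (integrable_finsetSum (Finset.range n) fun k _ => (hL2 k).integrable_sq).div_const _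
  have hVb : ∀ n : ℕ, ∫ ω, (∑ k ∈ Finset.range n, (d k ω) ^ 2) / n ∂μ ≤ |K| := by
    intro n
    rw [integral_div]
    rcases Nat.eq_zero_or_pos n with rfl | hn
    · simp
    · rw [div_le_iff₀ (by exact_mod_cast hn)]
      exact (hK n).trans (by gcongr; exact le_abs_self K)
  have hmV : ∀ (n : ℕ) ω, (mx (fun k => d k ω) n / Real.sqrt n) ^ 2
      ≤ (∑ k ∈ Finset.range n, (d k ω) ^ 2) / n := by
    intro n ω
    rw [div_pow, Real.sq_sqrt (Nat.cast_nonneg n)]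
    gcongr
    exact mx_sq_le _ n
  rw [Metric.tendsto_nhds]
  intro ε hε
  set R : ℝ := 2 * (|K| + 1) / ε with hR
  have hRp : 0 < R := by positivity
  have h1 : Tendsto (fun n : ℕ => ∫ ω, min (mx (fun k => d k ω) n / Real.sqrt n) R ∂μ) atTop
      (nhds (∫ _, (0 : ℝ) ∂μ)) := by
    refine tendsto_integral_of_dominated_convergence (fun _ => R)
      (fun n => (hmi n).aestronglyMeasurable.inf aestronglyMeasurable_const) (integrable_const _) ?_ ?_
    · refine fun n => Eventually.of_forall fun ω => ?_
      rw [Real.norm_eq_abs, abs_of_nonneg (le_min (hm0 n ω) hRp.le)]; exact min_le_right _ _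
    · filter_upwards [hM] with ω hω
      have := (tendsto_mx hω).min (tendsto_const_nhds (x := R))
      simpa [hRp.le] using this
  rw [integral_zero] at h1
  filter_upwards [Metric.tendsto_nhds.1 h1 (ε / 2) (by positivity)] with n hn
  rw [Real.dist_eq, sub_zero] at hn ⊢
  rw [abs_of_nonneg (integral_nonneg (hm0 n))]
  have hmini : Integrable (fun ω => min (mx (fun k => d k ω) n / Real.sqrt n) R) μ :=
    (hmi n).inf (integrable_const R)
  have hle : ∫ ω, mx (fun k => d k ω) n / Real.sqrt n ∂μ ≤
      ∫ ω, min (mx (fun k => d k ω) n / Real.sqrt n) R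
        + ((∑ k ∈ Finset.range n, (d k ω) ^ 2) / n) / R ∂μ := by
    refine integral_mono (hmi n) (hmini.add ((hVi n).div_const R)) fun ω => ?_
    have a1 := hmV n ω
    have a0 := hm0 n ω
    rcases min_cases (mx (fun k => d k ω) n / Real.sqrt n) R with ⟨h, _⟩ | ⟨h, h'⟩ <;> rw [h]
    · have : 0 ≤ ((∑ k ∈ Finset.range n, (d k ω) ^ 2) / n) / R :=
        div_nonneg ((sq_nonneg _).trans a1) hRp.le
      linarith
    · have : mx (fun k => d k ω) n / Real.sqrt n ≤ ((∑ k ∈ Finset.range n, (d k ω) ^ 2) / n) / R := by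
        rw [le_div_iff₀ hRp]; nlinarith
      linarith
  rw [integral_add hmini ((hVi n).div_const R), integral_div R] at hle
  have h3 : (∫ ω, (∑ k ∈ Finset.range n, (d k ω) ^ 2) / n ∂μ) / R ≤ |K| / R := by
    gcongr; exact hVb n
  have h4 : |K| / R < ε / 2 := by
    rw [div_lt_iff₀ hRp, hR]
    field_simp
    linarith
  have := (abs_lt.1 hn).2
  linarith

lemma PP_integrable (μ : Measure Ω) [IsProbabilityMeasure μ] {𝒢 : Filtration ℕ mΩ} {d : ℕ → Ω → ℝ}
    (hd : ∀ k, Measurable[𝒢 (k + 1)] (d k))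
    (hI : ∀ k, Integrable (d k) μ) (t c : ℝ) (hc : 0 ≤ c) (n k : ℕ) (hk : k ≤ n) :
    Integrable (fun ω => PP t c n (fun k => d k ω) k) μ := by
  have hd' : ∀ k, Measurable (d k) := fun k => (hd k).mono (𝒢.le _) le_rfl
  have hm := ((PP_measurable hd t c n k).mono (𝒢.le k) le_rfl).aestronglyMeasurable (μ := μ)
  exact Integrable.mono' (((integrable_const 1).add ((mx_integrable μ hd' hI n).const_mul |t|)).const_mul _)
    hm (Eventually.of_forall fun ω => PP_bound t c hc n (fun k => d k ω) k hk)

lemma PP_mart (μ : Measure Ω) [IsProbabilityMeasure μ] {𝒢 : Filtration ℕ mΩ} {d : ℕ → Ω → ℝ}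
    (hd : ∀ k, Measurable[𝒢 (k + 1)] (d k))
    (hI : ∀ k, Integrable (d k) μ) (h0 : ∀ k, μ[d k | 𝒢 k] =ᵐ[μ] 0)
    (t c : ℝ) (hc : 0 ≤ c) (n m : ℕ)
    {Z : Ω → ℝ} (hZ : Measurable[𝒢 m] Z) {B : ℝ} (hB : ∀ᵐ ω ∂μ, |Z ω| ≤ B) (k : ℕ) (hmk : m ≤ k)
    (hk : k ≤ n) :
    ∫ ω, PP t c n (fun k => d k ω) k * (Z ω : ℂ) ∂μ =
      ∫ ω, PP t c n (fun k => d k ω) m * (Z ω : ℂ) ∂μ := by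
  induction k, hmk using Nat.le_induction with
  | base => rfl
  | succ k hmk ih =>
    rw [← ih (by omega)]
    have hZm : Measurable (fun ω => (Z ω : ℂ)) :=
      Complex.measurable_ofReal.comp (hZ.mono (𝒢.le m) le_rfl)
    have hZb : ∀ᵐ ω ∂μ, ‖(Z ω : ℂ)‖ ≤ B := by simpa using hB
    have hA := PP_A_measurable hd t c n k
    set A : Ω → ℂ := fun ω =>
      if ∑ j ∈ Finset.range k, (d j ω) ^ 2 ≤ c * n then PP t c n (fun k => d k ω) k else 0 with hAdef
    have hAb : ∀ ω, ‖A ω‖ ≤ Real.exp (t ^ 2 * c / 2) := by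
      intro ω
      simp only [hAdef]
      split_ifs with h
      · exact PP_norm_le t c hc n (fun k => d k ω) k h
      · simpa using (Real.exp_pos _).le
    have hPk : Integrable (fun ω => PP t c n (fun k => d k ω) k * (Z ω : ℂ)) μ :=
      (PP_integrable μ hd hI t c hc n k (by omega)).mul_bdd hZm.aestronglyMeasurable hZb
    have hA2 : Measurable[𝒢 k] (fun ω => A ω * (Z ω : ℂ) * (Complex.I * ((t / Real.sqrt n : ℝ) : ℂ))) :=
      (hA.mul (Complex.measurable_ofReal.comp (hZ.mono (𝒢.mono hmk) le_rfl))).mul_const _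
    have hA2i : Integrable (fun ω => A ω * (Z ω : ℂ) * (Complex.I * ((t / Real.sqrt n : ℝ) : ℂ))
        * (d k ω : ℂ)) μ := by
      refine Integrable.bdd_mul (c := Real.exp (t ^ 2 * c / 2) * B * |t / Real.sqrt n|) (hI k).ofReal
        (hA2.mono (𝒢.le k) le_rfl).aestronglyMeasurable ?_
      filter_upwards [hZb] with ω hω
      rw [norm_mul, norm_mul, norm_mul, Complex.norm_I, one_mul, Complex.norm_real (t / _),
        Real.norm_eq_abs]
      gcongr
      exact hAb ω
    have ho := orth μ (𝒢.le k) hA2 (hI k) hA2i (h0 k)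
    rw [← add_zero (∫ ω, PP t c n (fun k => d k ω) k * (Z ω : ℂ) ∂μ), ← ho, ← integral_add hPk hA2i]
    congr 1
    ext ω
    simp only [PP, hAdef]
    push_cast
    ring

lemma weak_limit (μ : Measure Ω) [IsProbabilityMeasure μ] {𝒢 : Filtration ℕ mΩ} {d : ℕ → Ω → ℝ}
    (hd : ∀ k, Measurable[𝒢 (k + 1)] (d k))
    (hI : ∀ k, Integrable (d k) μ) (h0 : ∀ k, μ[d k | 𝒢 k] =ᵐ[μ] 0)
    (hmx : Tendsto (fun n : ℕ => ∫ ω, mx (fun k => d k ω) n / Real.sqrt n ∂μ) atTop (nhds 0))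
    (t c : ℝ) (hc : 0 ≤ c)
    {Z : Ω → ℝ} (hZ : Measurable Z) {B : ℝ} (hB : ∀ ω, |Z ω| ≤ B) :
    Tendsto (fun n => ∫ ω, PP t c n (fun k => d k ω) n * (Z ω : ℂ) ∂μ) atTop
      (nhds (∫ ω, (Z ω : ℂ) ∂μ)) := by
  have hd' : ∀ k, Measurable (d k) := fun k => (hd k).mono (𝒢.le _) le_rfl
  have hm0 : ∀ (n : ℕ) ω, 0 ≤ mx (fun k => d k ω) n / Real.sqrt n := fun n ω =>
    div_nonneg (mx_nonneg _ _) (Real.sqrt_nonneg _)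
  have hmi := mx_integrable μ hd' hI
  have hB0 : 0 ≤ B := by
    obtain ⟨ω⟩ := nonempty_of_isProbabilityMeasure μ
    exact (abs_nonneg _).trans (hB ω)
  have hZi : Integrable Z μ := Integrable.of_bound hZ.aestronglyMeasurable B (Eventually.of_forall hB)
  set E := Real.exp (t ^ 2 * c / 2) with hE
  have hEp : 0 < E := Real.exp_pos _
  let Zc : ℕ → Ω → ℝ := fun n => μ[Z | 𝒢 n]
  have hZcm : ∀ n, Measurable[𝒢 n] (Zc n) := fun n => stronglyMeasurable_condExp.measurable
  have hZcm' : ∀ n, Measurable (Zc n) := fun n => (hZcm n).mono (𝒢.le n) le_rfl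
  have hZcc : ∀ n, Measurable (fun ω => (Zc n ω : ℂ)) := fun n =>
    Complex.measurable_ofReal.comp (hZcm' n)
  have hZcb : ∀ n, ∀ᵐ ω ∂μ, |Zc n ω| ≤ B := fun n =>
    ae_bdd_abs_condExp_of_ae_bdd_abs (Eventually.of_forall hB)
  have hZcb' : ∀ n, ∀ᵐ ω ∂μ, ‖(Zc n ω : ℂ)‖ ≤ B := fun n => by simpa using hZcb n
  have hZci : ∀ n, Integrable (Zc n) μ := fun n => integrable_condExp
  let Zi : Ω → ℝ := μ[Z | ⨆ n, 𝒢 n]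
  have hZib : ∀ᵐ ω ∂μ, |Zi ω| ≤ B := ae_bdd_abs_condExp_of_ae_bdd_abs (Eventually.of_forall hB)
  have hZii : Integrable Zi μ := integrable_condExp
  have hL1 : Tendsto (fun n => ∫ ω, |Zc n ω - Zi ω| ∂μ) atTop (nhds (∫ _, (0 : ℝ) ∂μ)) := by
    refine tendsto_integral_of_dominated_convergence (fun _ => 2 * B)
      (fun n => ((hZci n).sub hZii).abs.aestronglyMeasurable) (integrable_const _) ?_ ?_
    · intro n
      filter_upwards [hZcb n, hZib] with ω h1 h2
      rw [Real.norm_eq_abs, abs_abs]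
      exact (abs_sub _ _).trans (by linarith)
    · filter_upwards [tendsto_ae_condExp (ℱ := 𝒢) (μ := μ) Z] with ω hω
      have := (hω.sub_const (Zi ω)).abs
      simpa [Zi, Zc] using this
  rw [integral_zero] at hL1
  have hPi : ∀ n k, k ≤ n → Integrable (fun ω => PP t c n (fun k => d k ω) k) μ :=
    fun n k hk => PP_integrable μ hd hI t c hc n k hk
  -- replace Z by Zc n
  have hrep : ∀ n, ∫ ω, PP t c n (fun k => d k ω) n * (Z ω : ℂ) ∂μ
      = ∫ ω, PP t c n (fun k => d k ω) n * (Zc n ω : ℂ) ∂μ := by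
    intro n
    have i1 : Integrable (fun ω => PP t c n (fun k => d k ω) n * (Z ω : ℂ)) μ :=
      (hPi n n le_rfl).mul_bdd (c := B) (Complex.measurable_ofReal.comp hZ).aestronglyMeasurable
        (Eventually.of_forall fun ω => by simpa using hB ω)
    have i2 : Integrable (fun ω => PP t c n (fun k => d k ω) n * (Zc n ω : ℂ)) μ :=
      (hPi n n le_rfl).mul_bdd (hZcc n).aestronglyMeasurable (hZcb' n)
    have ho := orth μ (𝒢.le n) (D := fun ω => Z ω - Zc n ω) (PP_measurable hd t c n n)
      (hZi.sub (hZci n)) (by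
        refine (i1.sub i2).congr (Eventually.of_forall fun ω => ?_)
        simp only [Pi.sub_apply]; push_cast; ring) (by
        have e1 := condExp_sub (μ := μ) hZi (hZci n) (𝒢 n)
        have e2 : μ[Zc n | 𝒢 n] = Zc n :=
          condExp_of_stronglyMeasurable (𝒢.le n) stronglyMeasurable_condExp (hZci n)
        rw [e2] at e1
        refine (show _ =ᵐ[μ] _ from e1).trans ?_
        exact Eventually.of_forall fun ω => by simp [Zc])
    rw [← sub_eq_zero, ← integral_sub i1 i2, ← ho]
    congr 1; ext ω; push_cast; ring
  refine tendsto_of_approx fun ε hε => ?_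
  obtain ⟨m, hm⟩ := eventually_atTop.1
    (Metric.tendsto_nhds.1 hL1 (min (ε / 4 / (E + 1)) ε) (by positivity))
  refine ⟨fun n => ∫ ω, PP t c n (fun k => d k ω) n * (Zc m ω : ℂ) ∂μ,
    ∫ ω, (Zc m ω : ℂ) ∂μ, ?_, ?_, ?_⟩
  · -- limit for fixed m
    have hd0 : Tendsto (fun n => ∫ ω, (PP t c (max n m) (fun k => d k ω) m - 1) * (Zc m ω : ℂ) ∂μ) atTop
        (nhds 0) := by
      have hmax : Tendsto (fun n => max n m) atTop atTop :=
        tendsto_atTop_mono (fun n => le_max_left n m) tendsto_id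
      refine gDCT μ (m := fun n ω => mx (fun k => d k ω) (max n m) / Real.sqrt (max n m : ℕ))
        (B := (E + 1) * B) (B' := E * |t| * B) (by positivity) (by positivity) ?_ (fun n => hmi _)
        (fun n ω => hm0 _ ω) (hmx.comp hmax) ?_ ?_
      · intro n
        exact ((((PP_measurable hd t c _ m).mono (𝒢.le m) le_rfl).sub_const 1).mul
          (hZcc m)).aestronglyMeasurable
      · intro n
        filter_upwards [hZcb' m] with ω hω
        have hb := PP_bound t c hc (max n m) (fun k => d k ω) m (le_max_right _ _)
        rw [norm_mul]
        have hb2 := (norm_sub_le (PP t c (max n m) (fun k => d k ω) m) 1)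
        rw [norm_one] at hb2
        calc _ ≤ (E * (1 + |t| * (mx (fun k => d k ω) (max n m) / Real.sqrt (max n m : ℕ))) + 1) * B :=
              mul_le_mul (hb2.trans (by gcongr)) hω (norm_nonneg _) (by have := hm0 (max n m) ω; positivity)
          _ = _ := by ring
      · refine Eventually.of_forall fun ω => ?_
        have := (((PP_fixed (fun k => d k ω) t c m).comp hmax).sub_const 1).mul_const (Zc m ω : ℂ)
        simpa using this
    rw [← tendsto_sub_nhds_zero_iff]
    refine hd0.congr' ?_
    filter_upwards [eventually_ge_atTop m] with n hn
    have hci : Integrable (fun ω => (Zc m ω : ℂ)) μ := (hZci m).ofReal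
    rw [max_eq_left hn, PP_mart μ hd hI h0 t c hc n m (hZcm m) (hZcb m) n hn le_rfl, ← integral_sub
      ((hPi n m hn).mul_bdd (hZcc m).aestronglyMeasurable (hZcb' m)) hci]
    congr 1; ext ω; ring
  · -- difference
    have hsm := hmx.const_mul (E * |t| * (2 * B))
    rw [mul_zero] at hsm
    filter_upwards [eventually_ge_atTop m, Metric.tendsto_nhds.1 hsm (ε / 4) (by positivity)] with n hn hs
    rw [hrep]
    rw [← integral_sub ((hPi n n le_rfl).mul_bdd (hZcc n).aestronglyMeasurable (hZcb' n))
      ((hPi n n le_rfl).mul_bdd (hZcc m).aestronglyMeasurable (hZcb' m))]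
    have hdi : ∀ k, Integrable (fun ω => |Zc k ω - Zi ω|) μ := fun k => ((hZci k).sub hZii).abs
    have hbi : Integrable (fun ω => E * |Zc n ω - Zi ω| + E * |Zc m ω - Zi ω|
      + E * |t| * (2 * B) * (mx (fun k => d k ω) n / Real.sqrt n)) μ :=
      (((hdi n).const_mul E).add ((hdi m).const_mul E)).add ((hmi n).const_mul _)
    refine (norm_integral_le_of_norm_le hbi ?_).trans ?_
    · filter_upwards [hZcb n, hZcb m] with ω h1 h2
      rw [← mul_sub, norm_mul, ← Complex.ofReal_sub, Complex.norm_real, Real.norm_eq_abs]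
      have hb := PP_bound t c hc n (fun k => d k ω) n le_rfl
      have a1 : |Zc n ω - Zc m ω| ≤ 2 * B := (abs_sub _ _).trans (by linarith)
      have a2 : |Zc n ω - Zc m ω| ≤ |Zc n ω - Zi ω| + |Zc m ω - Zi ω| := by
        rw [abs_sub_comm (Zc m ω)]; exact abs_sub_le _ _ _
      have a3 := hm0 n ω
      calc _ ≤ E * (1 + |t| * (mx (fun k => d k ω) n / Real.sqrt n)) * |Zc n ω - Zc m ω| := by gcongr
        _ = E * |Zc n ω - Zc m ω|
            + E * |t| * |Zc n ω - Zc m ω| * (mx (fun k => d k ω) n / Real.sqrt n) := by ring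
        _ ≤ E * (|Zc n ω - Zi ω| + |Zc m ω - Zi ω|)
            + E * |t| * (2 * B) * (mx (fun k => d k ω) n / Real.sqrt n) := by gcongr
        _ = _ := by ring
    · have q1 := hm n hn
      have q2 := hm m le_rfl
      rw [Real.dist_eq, sub_zero, abs_of_nonneg (integral_nonneg fun _ => abs_nonneg _)] at q1 q2
      have hadd : Integrable (fun ω => E * |Zc n ω - Zi ω| + E * |Zc m ω - Zi ω|) μ :=
        ((hdi n).const_mul E).add ((hdi m).const_mul E)
      rw [integral_add hadd ((hmi n).const_mul _),
        integral_add ((hdi n).const_mul E) ((hdi m).const_mul E), integral_const_mul,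
        integral_const_mul, integral_const_mul]
      rw [Real.dist_eq, sub_zero] at hs
      have hs' := (abs_lt.1 hs).2
      have r1 := q1.trans_le (min_le_left _ _)
      have r2 := q2.trans_le (min_le_left _ _)
      rw [lt_div_iff₀ (by positivity)] at r1 r2
      have s1 : 0 ≤ ∫ ω, |Zc n ω - Zi ω| ∂μ := integral_nonneg fun _ => abs_nonneg _
      have s2 : 0 ≤ ∫ ω, |Zc m ω - Zi ω| ∂μ := integral_nonneg fun _ => abs_nonneg _
      nlinarith
  · have : ∫ ω, (Zc m ω : ℂ) ∂μ = ∫ ω, (Z ω : ℂ) ∂μ := by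
      rw [integral_complex_ofReal, integral_complex_ofReal]
      congr 1
      exact integral_condExp (𝒢.le m)
    rw [this, sub_self, norm_zero]; exact hε.le

end Meas

section Final

variable {Ω : Type*} {mΩ : MeasurableSpace Ω}

lemma norm_split (μ : Measure Ω) [IsProbabilityMeasure μ] {F : Ω → ℂ} (hF : Measurable F)
    (hb : ∀ ω, ‖F ω‖ ≤ 1) {H s : Set Ω} (hs : MeasurableSet s) :
    ‖∫ ω in H, F ω ∂μ - ∫ ω in H ∩ s, F ω ∂μ‖ ≤ μ.real sᶜ := by
  have hi : Integrable F μ :=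
    Integrable.of_bound hF.aestronglyMeasurable 1 (Eventually.of_forall hb)
  rw [← integral_inter_add_sdiff hs hi.integrableOn, add_sub_cancel_left]
  refine (norm_setIntegral_le_of_norm_le_const (measure_lt_top μ _) fun ω _ => hb ω).trans ?_
  rw [one_mul]
  exact measureReal_mono fun ω hω => hω.2

theorem char_limit (μ : Measure Ω) [IsProbabilityMeasure μ] {𝒢 : Filtration ℕ mΩ} {d : ℕ → Ω → ℝ}
    (hd : ∀ k, Measurable[𝒢 (k + 1)] (d k))
    (hL2 : ∀ k, MemLp (d k) 2 μ) (h0 : ∀ k, μ[d k | 𝒢 k] =ᵐ[μ] 0) {K : ℝ}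
    (hK : ∀ n : ℕ, ∫ ω, ∑ k ∈ Finset.range n, (d k ω) ^ 2 ∂μ ≤ K * n) {σ : Ω → ℝ}
    (hσ : Measurable σ) (hσ0 : ∀ ω, 0 ≤ σ ω)
    (hM : ∀ᵐ ω ∂μ, Tendsto (fun n : ℕ => (∑ k ∈ Finset.range n, (d k ω) ^ 2) / n) atTop (nhds (σ ω)))
    {H : Set Ω} (hH : MeasurableSet H) (t : ℝ) :
    Tendsto (fun n : ℕ => ∫ ω in H, Complex.exp
        (Complex.I * ((t * ((∑ k ∈ Finset.range n, d k ω) / Real.sqrt n) : ℝ) : ℂ)) ∂μ) atTop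
      (nhds (∫ ω in H, ((Real.exp (-(t ^ 2 * σ ω) / 2) : ℝ) : ℂ) ∂μ)) := by
  have hd' : ∀ k, Measurable (d k) := fun k => (hd k).mono (𝒢.le _) le_rfl
  have hI : ∀ k, Integrable (d k) μ := fun k => (hL2 k).integrable (by norm_num)
  have hm0 : ∀ (n : ℕ) ω, 0 ≤ mx (fun k => d k ω) n / Real.sqrt n := fun n ω =>
    div_nonneg (mx_nonneg _ _) (Real.sqrt_nonneg _)
  have hmi := mx_integrable μ hd' hI
  have hmx := mx_L1 μ hd' hL2 hK hM
  have hFm : ∀ n : ℕ, Measurable (fun ω => Complex.exp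
        (Complex.I * ((t * ((∑ k ∈ Finset.range n, d k ω) / Real.sqrt n) : ℝ) : ℂ))) := fun n => by
    have : Measurable (fun ω => ∑ k ∈ Finset.range n, d k ω) :=
      Finset.measurable_fun_sum _ fun k _ => hd' k
    fun_prop
  have hFb : ∀ (n : ℕ) ω, ‖Complex.exp
        (Complex.I * ((t * ((∑ k ∈ Finset.range n, d k ω) / Real.sqrt n) : ℝ) : ℂ))‖ = 1 := fun n ω => by
    rw [mul_comm Complex.I, Complex.norm_exp_ofReal_mul_I]
  have hUm : Measurable (fun ω => Real.exp (-(t ^ 2 * σ ω) / 2)) := by fun_prop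
  have hUb : ∀ ω, |Real.exp (-(t ^ 2 * σ ω) / 2)| ≤ 1 := fun ω => by
    rw [abs_of_pos (Real.exp_pos _), Real.exp_le_one_iff]
    have := mul_nonneg (sq_nonneg t) (hσ0 ω)
    linarith
  have htail : Tendsto (fun N : ℕ => μ.real {ω | σ ω < N}ᶜ) atTop (nhds 0) := by
    have h1 : Tendsto (fun N : ℕ => ∫ ω, ({ω | σ ω < N}ᶜ).indicator (1 : Ω → ℝ) ω ∂μ) atTop
        (nhds (∫ _, (0 : ℝ) ∂μ)) := by
      refine tendsto_integral_of_dominated_convergence (fun _ => 1) ?_ (integrable_const _) ?_ ?_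
      · exact fun N => (measurable_one.indicator
          (measurableSet_lt hσ measurable_const).compl).aestronglyMeasurable
      · refine fun N => Eventually.of_forall fun ω => ?_
        by_cases h : ω ∈ ({ω | σ ω < N}ᶜ : Set Ω)
        · simp [Set.indicator_of_mem h]
        · simp [Set.indicator_of_notMem h]
      · refine Eventually.of_forall fun ω => ?_
        refine tendsto_const_nhds.congr' ?_
        obtain ⟨N, hN⟩ := exists_nat_gt (σ ω)
        filter_upwards [eventually_ge_atTop N] with k hk
        rw [Set.indicator_of_notMem]
        simp only [Set.mem_compl_iff, Set.mem_ofPred_eq, not_not]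
        exact hN.trans_le (by exact_mod_cast hk)
    rw [integral_zero] at h1
    refine h1.congr fun N => ?_
    rw [integral_indicator_one (measurableSet_lt hσ measurable_const).compl]
  refine tendsto_of_approx fun ε hε => ?_
  obtain ⟨N, hN⟩ := (htail.eventually (gt_mem_nhds hε)).exists
  have hs : MeasurableSet {ω | σ ω < N} := measurableSet_lt hσ measurable_const
  have hHs := hH.inter hs
  refine ⟨_, _, ?_, Eventually.of_forall fun n => (norm_split μ (H := H) (hFm n) (fun ω => (hFb n ω).le) hs).trans hN.le,
    (norm_split μ (H := H) (F := fun ω => ((Real.exp (-(t ^ 2 * σ ω) / 2) : ℝ) : ℂ))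
      (Complex.measurable_ofReal.comp hUm) (fun ω => by rw [Complex.norm_real]; exact hUb ω) hs).trans hN.le⟩
  set G := H ∩ {ω | σ ω < N} with hG
  obtain ⟨c, hc⟩ : ∃ c : ℝ, c = (N : ℝ) := ⟨_, rfl⟩
  have hc0 : 0 ≤ c := hc ▸ Nat.cast_nonneg N
  set E := Real.exp (t ^ 2 * c / 2) with hE
  have hEp : 0 < E := Real.exp_pos _
  have hw := weak_limit μ hd hI h0 hmx t c hc0 (Z := G.indicator fun ω => Real.exp (-(t ^ 2 * σ ω) / 2))
    (hUm.indicator hHs) (B := 1) (fun ω => by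
      by_cases h : ω ∈ G
      · rw [Set.indicator_of_mem h]; exact hUb ω
      · rw [Set.indicator_of_notMem h]; simp)
  have hPm : ∀ n, Measurable (fun ω => PP t c n (fun k => d k ω) n) := fun n =>
    (PP_measurable hd t c n n).mono (𝒢.le n) le_rfl
  have hUc : Measurable (fun ω => ((Real.exp (-(t ^ 2 * σ ω) / 2) : ℝ) : ℂ)) :=
    Complex.measurable_ofReal.comp hUm
  have hdiff : Tendsto (fun n : ℕ => ∫ ω, G.indicator (fun ω => Complex.exp
        (Complex.I * ((t * ((∑ k ∈ Finset.range n, d k ω) / Real.sqrt n) : ℝ) : ℂ))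
        - PP t c n (fun k => d k ω) n * ((Real.exp (-(t ^ 2 * σ ω) / 2) : ℝ) : ℂ)) ω ∂μ) atTop (nhds 0) := by
    refine gDCT μ (m := fun n ω => mx (fun k => d k ω) n / Real.sqrt n)
        (B := 1 + E) (B' := E * |t|) (by positivity) (by positivity) ?_ hmi hm0 hmx ?_ ?_
    · exact fun n => (((hFm n).sub ((hPm n).mul hUc)).indicator hHs).aestronglyMeasurable
    · refine fun n => Eventually.of_forall fun ω => (norm_indicator_le_norm_self _ _).trans ?_
      have hb := PP_bound t c hc0 n (fun k => d k ω) n le_rfl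
      refine (norm_sub_le _ _).trans ?_
      rw [hFb, norm_mul, Complex.norm_real, Real.norm_eq_abs]
      have a3 := hm0 n ω
      calc _ ≤ 1 + E * (1 + |t| * (mx (fun k => d k ω) n / Real.sqrt n)) * 1 := by
            gcongr; exact hUb ω
        _ = _ := by ring
    · filter_upwards [hM] with ω hω
      by_cases h : ω ∈ G
      · simp only [Set.indicator_of_mem h]
        exact PP_limit t c (hc ▸ h.2) hω
      · simp only [Set.indicator_of_notMem h]
        exact tendsto_const_nhds
  have hsum := hdiff.add hw
  rw [zero_add] at hsum
  have e2 : ∫ ω, ((G.indicator (fun ω => Real.exp (-(t ^ 2 * σ ω) / 2)) ω : ℝ) : ℂ) ∂μ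
      = ∫ ω in G, ((Real.exp (-(t ^ 2 * σ ω) / 2) : ℝ) : ℂ) ∂μ := by
    rw [← integral_indicator hHs]
    congr 1; ext ω
    by_cases h : ω ∈ G
    · simp only [Set.indicator_of_mem h]
    · simp only [Set.indicator_of_notMem h]; simp
  rw [e2] at hsum
  refine hsum.congr fun n => ?_
  have hPi := PP_integrable μ hd hI t c hc0 n n le_rfl
  have hPU : Integrable (fun ω => PP t c n (fun k => d k ω) n
      * ((G.indicator (fun ω => Real.exp (-(t ^ 2 * σ ω) / 2)) ω : ℝ) : ℂ)) μ :=
    hPi.mul_bdd (c := 1) (Complex.measurable_ofReal.comp (hUm.indicator hHs)).aestronglyMeasurable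
      (Eventually.of_forall fun ω => by
        rw [Complex.norm_real]
        exact (norm_indicator_le_norm_self _ _).trans (hUb ω))
  have hFi : Integrable (fun ω => Complex.exp
        (Complex.I * ((t * ((∑ k ∈ Finset.range n, d k ω) / Real.sqrt n) : ℝ) : ℂ))) μ :=
    Integrable.of_bound (hFm n).aestronglyMeasurable 1 (Eventually.of_forall fun ω => (hFb n ω).le)
  have hPU2 : Integrable (fun ω => PP t c n (fun k => d k ω) n
      * ((Real.exp (-(t ^ 2 * σ ω) / 2) : ℝ) : ℂ)) μ :=
    hPi.mul_bdd (c := 1) hUc.aestronglyMeasurable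
      (Eventually.of_forall fun ω => by
        rw [Complex.norm_real]
        exact hUb ω)
  have hDi : Integrable (fun ω => G.indicator (fun ω => Complex.exp
        (Complex.I * ((t * ((∑ k ∈ Finset.range n, d k ω) / Real.sqrt n) : ℝ) : ℂ))
        - PP t c n (fun k => d k ω) n * ((Real.exp (-(t ^ 2 * σ ω) / 2) : ℝ) : ℂ)) ω) μ :=
    (hFi.sub hPU2).indicator hHs
  rw [← integral_add hDi hPU, ← integral_indicator hHs]
  congr 1; ext ω
  by_cases h : ω ∈ G
  · simp only [Set.indicator_of_mem h]; ring
  · simp only [Set.indicator_of_notMem h]; simp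

lemma gauss_int (v : ℝ) (hv : 0 ≤ v) (g : BoundedContinuousFunction ℝ ℝ) :
    ∫ x, g x ∂(gaussianReal 0 v.toNNReal) = ∫ x, g (Real.sqrt v * x) ∂(gaussianReal 0 1) := by
  have h := gaussianReal_map_const_mul (μ := 0) (v := 1) (Real.sqrt v)
  have e : NNReal.mk (Real.sqrt v ^ 2) (sq_nonneg _) * 1 = v.toNNReal := by
    rw [mul_one]
    ext
    simp [Real.sq_sqrt hv, hv]
  rw [mul_zero, e] at h
  rw [← h, integral_map (by fun_prop) (by fun_prop)]

theorem stable_of_char (μ : Measure Ω) [IsProbabilityMeasure μ] {W : ℕ → Ω → ℝ}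
    (hW : ∀ n, Measurable (W n)) {σ : Ω → ℝ} (hσ : Measurable σ) (hσ0 : ∀ ω, 0 ≤ σ ω)
    {H : Set Ω} (hH0 : μ H ≠ 0)
    (h : ∀ t : ℝ, Tendsto (fun n : ℕ => ∫ ω in H, Complex.exp (Complex.I * ((t * W n ω : ℝ) : ℂ)) ∂μ) atTop
      (nhds (∫ ω in H, ((Real.exp (-(t ^ 2 * σ ω) / 2) : ℝ) : ℂ) ∂μ)))
    (g : BoundedContinuousFunction ℝ ℝ) :
      Tendsto (fun n => ∫ ω, g (W n ω) ∂μ[|H]) atTop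
        (nhds (∫ ω, ∫ x, g x ∂(gaussianReal 0 (σ ω).toNNReal) ∂μ[|H])) := by
  have hP : IsProbabilityMeasure (μ[|H]) := cond_isProbabilityMeasure hH0
  have hch : ∀ t : ℝ, Tendsto (fun n : ℕ => ∫ ω, Complex.exp (Complex.I * ((t * W n ω : ℝ) : ℂ)) ∂μ[|H]) atTop
      (nhds (∫ ω, ((Real.exp (-(t ^ 2 * σ ω) / 2) : ℝ) : ℂ) ∂μ[|H])) := by
    intro t
    simp only [ProbabilityTheory.cond, integral_smul_measure]
    exact (h t).const_smul _
  generalize μ[|H] = P at hP hch ⊢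
  have hq : Measurable (fun p : Ω × ℝ => Real.sqrt (σ p.1) * p.2) := by fun_prop
  let ν : ℕ → ProbabilityMeasure ℝ := fun n => ⟨P.map (W n), Measure.isProbabilityMeasure_map (hW n).aemeasurable⟩
  let ν₀ : ProbabilityMeasure ℝ := ⟨(P.prod (gaussianReal 0 1)).map (fun p : Ω × ℝ => Real.sqrt (σ p.1) * p.2),
    Measure.isProbabilityMeasure_map hq.aemeasurable⟩
  have hconv : Tendsto ν atTop (nhds ν₀) := by
    rw [ProbabilityMeasure.tendsto_iff_tendsto_charFun]
    intro t
    have e1 : ∀ n, charFun (ν n : Measure ℝ) t = ∫ ω, Complex.exp (Complex.I * ((t * W n ω : ℝ) : ℂ)) ∂P := by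
      intro n
      rw [charFun_apply_real]
      simp only [ν, ProbabilityMeasure.coe_mk]
      rw [integral_map (hW n).aemeasurable (by fun_prop)]
      congr 1; ext ω; congr 1; push_cast; ring
    have e2 : charFun (ν₀ : Measure ℝ) t = ∫ ω, ((Real.exp (-(t ^ 2 * σ ω) / 2) : ℝ) : ℂ) ∂P := by
      rw [charFun_apply_real]
      simp only [ν₀, ProbabilityMeasure.coe_mk]
      rw [integral_map hq.aemeasurable (by fun_prop), integral_prod]
      · congr 1; ext ω
        have := charFun_gaussianReal (μ := 0) (v := 1) (t * Real.sqrt (σ ω))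
        rw [charFun_apply_real] at this
        have e3 : ((Real.sqrt (σ ω) : ℝ) : ℂ) ^ 2 = (σ ω : ℂ) := by
          rw [← Complex.ofReal_pow, Real.sq_sqrt (hσ0 ω)]
        calc _ = ∫ x, Complex.exp (((t * Real.sqrt (σ ω) : ℝ) : ℂ) * (x : ℂ) * Complex.I) ∂(gaussianReal 0 1) := by
              congr 1; ext x; congr 1; push_cast; ring
          _ = _ := by
              rw [this]
              push_cast
              congr 1
              rw [mul_pow, e3]
              simp
              ring
      · refine Integrable.of_bound (C := 1) ?_ (Eventually.of_forall fun p => ?_)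
        · exact Measurable.aestronglyMeasurable (by fun_prop)
        · rw [← Complex.ofReal_mul, Complex.norm_exp_ofReal_mul_I]
    rw [e2]
    exact (hch t).congr fun n => (e1 n).symm
  have hfin := (ProbabilityMeasure.tendsto_iff_forall_integral_tendsto.1 hconv) g
  have e1 : ∀ n, ∫ x, g x ∂(ν n : Measure ℝ) = ∫ ω, g (W n ω) ∂P := fun n => by
    simp only [ν, ProbabilityMeasure.coe_mk]
    rw [integral_map (hW n).aemeasurable (by fun_prop)]
  have e2 : ∫ x, g x ∂(ν₀ : Measure ℝ) = ∫ ω, ∫ x, g x ∂(gaussianReal 0 (σ ω).toNNReal) ∂P := by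
    simp only [ν₀, ProbabilityMeasure.coe_mk]
    rw [integral_map hq.aemeasurable (by fun_prop), integral_prod]
    · congr 1; ext ω
      rw [gauss_int _ (hσ0 ω)]
    · refine Integrable.of_bound (C := ‖g‖) ?_ (Eventually.of_forall fun p => g.norm_coe_le_norm _)
      exact (g.continuous.measurable.comp hq).aestronglyMeasurable
  rw [e2] at hfin
  exact hfin.congr e1

end Final

end MCLT


namespace MCLT

lemma sum_Icc_one (F : ℕ → ℝ) (n : ℕ) :
    ∑ k ∈ Finset.Icc 1 n, F k = ∑ k ∈ Finset.range n, F (k + 1) := by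
  induction n with
  | zero => simp
  | succ n ih => rw [Finset.sum_Icc_succ_top (by omega), ih, Finset.sum_range_succ]

section CID

variable {Ω E : Type*} {mΩ : MeasurableSpace Ω} [MeasurableSpace E]

lemma cid_map (μ : Measure Ω) [IsProbabilityMeasure μ] (𝒢 : Filtration ℕ mΩ) (X : ℕ → Ω → E)
    (hX : ∀ n, 1 ≤ n → Measurable (X n)) (hcid : IsCID μ 𝒢 X) {n k : ℕ} (hnk : n < k)
    {s : Set Ω} (hs : MeasurableSet[𝒢 n] s) :
    (μ.restrict s).map (X k) = (μ.restrict s).map (X (n + 1)) := by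
  ext A hA
  have hsm : MeasurableSet s := 𝒢.le n s hs
  have hk := hX k (by omega)
  have hn := hX (n + 1) (by omega)
  rw [Measure.map_apply hk hA, Measure.map_apply hn hA]
  have h := hcid (A.indicator 1) (measurable_one.indicator hA) ⟨1, fun x => by
    by_cases h : x ∈ A
    · simp [h]
    · simp [h]⟩ n k hnk
  have key : ∀ j, 1 ≤ j → ∫ ω in s, μ[(fun ω => A.indicator (1 : E → ℝ) (X j ω)) | 𝒢 n] ω ∂μ
      = (μ.restrict s).real (X j ⁻¹' A) := by
    intro j hj
    have e : (fun ω => A.indicator (1 : E → ℝ) (X j ω)) = (X j ⁻¹' A).indicator 1 := by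
      ext ω
      by_cases h : X j ω ∈ A
      · rw [Set.indicator_of_mem h, Set.indicator_of_mem (show ω ∈ X j ⁻¹' A from h)]; rfl
      · rw [Set.indicator_of_notMem h, Set.indicator_of_notMem (show ω ∉ X j ⁻¹' A from h)]
    rw [setIntegral_condExp (𝒢.le n) _ hs, e, integral_indicator_one (hX j hj hA)]
    rw [e]
    exact (integrable_const (1 : ℝ)).indicator (hX j hj hA)
  have h2 := setIntegral_congr_ae (μ := μ) (s := s) hsm
    (h.mono fun ω hω _ => hω)
  rw [key k (by omega), key (n + 1) (by omega)] at h2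
  exact (measureReal_eq_measureReal_iff).1 h2

lemma cid_integrable (μ : Measure Ω) [IsProbabilityMeasure μ] (𝒢 : Filtration ℕ mΩ) (X : ℕ → Ω → E)
    (hX : ∀ n, 1 ≤ n → Measurable (X n)) (hcid : IsCID μ 𝒢 X) (f : E → ℝ) (hf : Measurable f)
    (h1 : Integrable (fun ω => f (X 1 ω)) μ) {k : ℕ} (hk : 1 ≤ k) :
    Integrable (fun ω => f (X k ω)) μ := by
  have h := cid_map μ 𝒢 X hX hcid (n := 0) (k := k) (by omega) MeasurableSet.univ
  rw [Measure.restrict_univ, zero_add] at h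
  have h2 := (integrable_map_measure (μ := μ) hf.aestronglyMeasurable (hX 1 le_rfl).aemeasurable).2 h1
  rw [← h] at h2
  exact (integrable_map_measure (μ := μ) hf.aestronglyMeasurable (hX k hk).aemeasurable).1 h2

lemma cid_condExp (μ : Measure Ω) [IsProbabilityMeasure μ] (𝒢 : Filtration ℕ mΩ) (X : ℕ → Ω → E)
    (hX : ∀ n, 1 ≤ n → Measurable (X n)) (hcid : IsCID μ 𝒢 X) (f : E → ℝ) (hf : Measurable f)
    (h1 : Integrable (fun ω => f (X 1 ω)) μ) {n k : ℕ} (hnk : n < k) :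
    μ[(fun ω => f (X k ω)) | 𝒢 n] =ᵐ[μ] μ[(fun ω => f (X (n + 1) ω)) | 𝒢 n] := by
  have hi := fun j hj => cid_integrable μ 𝒢 X hX hcid f hf h1 (k := j) hj
  refine (ae_eq_condExp_of_forall_setIntegral_eq (𝒢.le n) (hi k (by omega)) ?_ ?_ ?_).symm
  · exact fun s _ _ => integrable_condExp.integrableOn
  · intro s hs _
    rw [setIntegral_condExp (𝒢.le n) (hi (n + 1) (by omega)) hs]
    rw [← integral_map (μ := μ.restrict s) (hX (n + 1) (by omega)).aemeasurable (f := f)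
      hf.aestronglyMeasurable,
      ← integral_map (μ := μ.restrict s) (hX k (by omega)).aemeasurable (f := f)
      hf.aestronglyMeasurable, cid_map μ 𝒢 X hX hcid hnk hs]
  · exact stronglyMeasurable_condExp.aestronglyMeasurable

end CID

end MCLT

/-- CLT (case III, predictive centering): if `(X n)` is `𝒢`-c.i.d., `f (X 1)` and
`f (X 1)²` are integrable, `sup_n E[C n ²] < ∞` where
`C n = n^{-1/2} (f (X 1) + ⋯ + f (X n) − n E[f (X (n+1)) | 𝒢 n])`, and
`M n = (1/n) ∑_{k=1}^n (f (X k) − k E[f (X (k+1)) | 𝒢 k] + (k−1) E[f (X k) | 𝒢 (k−1)])²`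
converges a.s. to a real random variable `σ²`, then `(C n)` converges stably with
representing measure `N(0, σ²)`. -/
theorem stmt19 {Ω E : Type*} {mΩ : MeasurableSpace Ω} [MeasurableSpace E]
    (μ : Measure Ω) [IsProbabilityMeasure μ] (𝒢 : Filtration ℕ mΩ) (X : ℕ → Ω → E)
    (h𝒢0 : 𝒢 0 = (⊥ : MeasurableSpace Ω))
    (hadp : ∀ n, 1 ≤ n → Measurable[𝒢 n] (X n))
    (hcid : IsCID μ 𝒢 X)
    (f : E → ℝ) (hf : Measurable f)
    (hint1 : Integrable (fun ω => f (X 1 ω)) μ)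
    (hint2 : Integrable (fun ω => (f (X 1 ω)) ^ 2) μ)
    (C : ℕ → Ω → ℝ)
    (hC : ∀ n ω, C n ω = ((∑ k ∈ Finset.Icc 1 n, f (X k ω))
      - n * (μ[(fun ω' => f (X (n + 1) ω')) | 𝒢 n]) ω) / Real.sqrt n)
    (hCL2 : ∀ n, Integrable (fun ω => (C n ω) ^ 2) μ)
    (hCbd : ∃ K : ℝ, ∀ n, ∫ ω, (C n ω) ^ 2 ∂μ ≤ K)
    (σsq : Ω → ℝ)
    (hM : ∀ᵐ ω ∂μ, Tendsto (fun n => (∑ k ∈ Finset.Icc 1 n,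
        (f (X k ω) - k * (μ[(fun ω' => f (X (k + 1) ω')) | 𝒢 k]) ω
          + (k - 1 : ℝ) * (μ[(fun ω' => f (X k ω')) | 𝒢 (k - 1)]) ω) ^ 2) / (n : ℝ))
      atTop (nhds (σsq ω))) :
    StableGaussLimit μ C σsq := by
  have hX : ∀ n, 1 ≤ n → Measurable (X n) := fun n hn => (hadp n hn).mono (𝒢.le n) le_rfl
  have hfi : ∀ k, 1 ≤ k → Integrable (fun ω => f (X k ω)) μ := fun k hk =>
    MCLT.cid_integrable μ 𝒢 X hX hcid f hf hint1 hk
  obtain ⟨Z, hZ⟩ : ∃ Z : ℕ → Ω → ℝ, ∀ k, Z k = μ[(fun ω' => f (X (k + 1) ω')) | 𝒢 k] := ⟨_, fun _ => rfl⟩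
  obtain ⟨d, hdd⟩ : ∃ d : ℕ → Ω → ℝ, ∀ k ω, d k ω =
    f (X (k + 1) ω) - (k + 1 : ℝ) * Z (k + 1) ω + k * Z k ω := ⟨_, fun _ _ => rfl⟩
  have hZm : ∀ k, Measurable[𝒢 k] (Z k) := fun k => by
    rw [hZ]; exact stronglyMeasurable_condExp.measurable
  have hZi : ∀ k, Integrable (Z k) μ := fun k => by
    rw [hZ]; exact integrable_condExp
  have hdf : ∀ k, d k = (fun ω => f (X (k + 1) ω)) - (k + 1 : ℝ) • Z (k + 1) + (k : ℝ) • Z k := by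
    intro k; ext ω; simp [hdd]
  have hd : ∀ k, Measurable[𝒢 (k + 1)] (d k) := by
    intro k
    rw [hdf]
    exact ((hf.comp (hadp (k + 1) (by omega))).sub ((hZm (k + 1)).const_smul (k + 1 : ℝ))).add
      (((hZm k).mono (𝒢.mono (Nat.le_succ k)) le_rfl).const_smul (k : ℝ))
  have hd' : ∀ k, Measurable (d k) := fun k => (hd k).mono (𝒢.le _) le_rfl
  have hdi : ∀ k, Integrable (d k) μ := by
    intro k
    rw [hdf]
    exact ((hfi (k + 1) (by omega)).sub ((hZi (k + 1)).smul _)).add ((hZi k).smul _)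
  have h0 : ∀ k, μ[d k | 𝒢 k] =ᵐ[μ] 0 := by
    intro k
    rw [hdf]
    have a1 := condExp_add ((hfi (k + 1) (by omega)).sub ((hZi (k + 1)).smul (k + 1 : ℝ)))
      ((hZi k).smul (k : ℝ)) (𝒢 k)
    have a2 := condExp_sub (hfi (k + 1) (by omega)) ((hZi (k + 1)).smul (k + 1 : ℝ)) (𝒢 k)
    have a3 := condExp_smul (μ := μ) (k + 1 : ℝ) (Z (k + 1)) (𝒢 k)
    have a4 := condExp_smul (μ := μ) (k : ℝ) (Z k) (𝒢 k)
    have a5 : μ[Z k | 𝒢 k] = Z k :=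
      condExp_of_stronglyMeasurable (𝒢.le k) (hZm k).stronglyMeasurable (hZi k)
    have a6 : μ[Z (k + 1) | 𝒢 k] =ᵐ[μ] μ[(fun ω' => f (X (k + 1 + 1) ω')) | 𝒢 k] := by
      rw [hZ (k + 1)]
      exact condExp_condExp_of_le (𝒢.mono (Nat.le_succ k)) (𝒢.le (k + 1))
    have a7 := MCLT.cid_condExp μ 𝒢 X hX hcid f hf hint1 (n := k) (k := k + 1 + 1) (by omega)
    filter_upwards [a1, a2, a3, a4, a6, a7] with ω b1 b2 b3 b4 b6 b7
    rw [b1, Pi.add_apply, b2, Pi.sub_apply, b3, b4]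
    simp only [Pi.smul_apply, smul_eq_mul, Pi.zero_apply]
    rw [a5, b6, b7, hZ k]
    ring
  have htel : ∀ n ω, ∑ k ∈ Finset.range n, d k ω = (∑ k ∈ Finset.Icc 1 n, f (X k ω)) - n * Z n ω := by
    intro n ω
    rw [MCLT.sum_Icc_one (fun k => f (X k ω))]
    induction n with
    | zero => simp
    | succ n ih =>
      rw [Finset.sum_range_succ, ih, hdd, Finset.sum_range_succ]
      push_cast
      ring
  have hCd : ∀ n ω, C n ω = (∑ k ∈ Finset.range n, d k ω) / Real.sqrt n := by
    intro n ω
    rw [hC, htel, hZ]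
  have hSm : ∀ n, Measurable[𝒢 n] (fun ω => ∑ k ∈ Finset.range n, d k ω) := by
    intro n
    refine Finset.measurable_fun_sum _ fun k hk => ?_
    exact (hd k).mono (𝒢.mono (Finset.mem_range.1 hk)) le_rfl
  have hSm' : ∀ n, Measurable (fun ω => ∑ k ∈ Finset.range n, d k ω) :=
    fun n => (hSm n).mono (𝒢.le n) le_rfl
  have hSC : ∀ n ω, (∑ k ∈ Finset.range n, d k ω) ^ 2 = n * (C n ω) ^ 2 := by
    intro n ω
    rw [hCd, div_pow, Real.sq_sqrt (Nat.cast_nonneg n)]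
    rcases Nat.eq_zero_or_pos n with rfl | hn
    · simp
    · have : (0 : ℝ) < n := by exact_mod_cast hn
      field_simp
  have hSL2 : ∀ n, MemLp (fun ω => ∑ k ∈ Finset.range n, d k ω) 2 μ := by
    intro n
    rw [memLp_two_iff_integrable_sq (hSm' n).aestronglyMeasurable]
    simp only [hSC]
    exact (hCL2 n).const_mul _
  have hL2 : ∀ k, MemLp (d k) 2 μ := by
    intro k
    refine ((hSL2 (k + 1)).sub (hSL2 k)).ae_eq (Eventually.of_forall fun ω => ?_)
    simp [Finset.sum_range_succ]
  have hvar : ∀ n : ℕ, ∫ ω, ∑ k ∈ Finset.range n, (d k ω) ^ 2 ∂μ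
      = ∫ ω, (∑ k ∈ Finset.range n, d k ω) ^ 2 ∂μ := by
    intro n
    induction n with
    | zero => simp
    | succ n ih =>
      have i1 : Integrable (fun ω => ∑ k ∈ Finset.range n, (d k ω) ^ 2) μ :=
        integrable_finsetSum _ fun k _ => (hL2 k).integrable_sq
      have i2 := (hL2 n).integrable_sq
      have i3 := (hSL2 n).integrable_sq
      have i4 : Integrable (fun ω => (∑ k ∈ Finset.range n, d k ω) * d n ω) μ :=
        (hSL2 n).integrable_mul (hL2 n)
      have o := MCLT.orth_real μ (𝒢.le n) (hSm n).stronglyMeasurable (hdi n) i4 (h0 n)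
      simp only [Finset.sum_range_succ]
      rw [integral_add i1 i2, ih]
      have e : (fun ω => (∑ k ∈ Finset.range n, d k ω + d n ω) ^ 2) = fun ω =>
          (∑ k ∈ Finset.range n, d k ω) ^ 2 + (2 * ((∑ k ∈ Finset.range n, d k ω) * d n ω) + (d n ω) ^ 2) := by
        ext ω; ring
      have i5 : Integrable (fun ω => 2 * ((∑ k ∈ Finset.range n, d k ω) * d n ω) + (d n ω) ^ 2) μ :=
        (i4.const_mul 2).add i2
      rw [e, integral_add i3 i5, integral_add (i4.const_mul 2) i2, integral_const_mul, o]
      ring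
  obtain ⟨K, hK⟩ := hCbd
  have hK' : ∀ n : ℕ, ∫ ω, ∑ k ∈ Finset.range n, (d k ω) ^ 2 ∂μ ≤ K * n := by
    intro n
    rw [hvar]
    simp only [hSC]
    rw [integral_const_mul, mul_comm K]
    exact mul_le_mul_of_nonneg_left (hK n) (Nat.cast_nonneg n)
  have hM' : ∀ᵐ ω ∂μ, Tendsto (fun n : ℕ => (∑ k ∈ Finset.range n, (d k ω) ^ 2) / n) atTop
      (nhds (σsq ω)) := by
    filter_upwards [hM] with ω hω
    refine hω.congr fun n => ?_
    rw [MCLT.sum_Icc_one (fun k => (f (X k ω) - k * (μ[(fun ω' => f (X (k + 1) ω')) | 𝒢 k]) ω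
          + (k - 1 : ℝ) * (μ[(fun ω' => f (X k ω')) | 𝒢 (k - 1)]) ω) ^ 2)]
    congr 1
    refine Finset.sum_congr rfl fun k _ => ?_
    rw [hdd, hZ, hZ]
    simp
  have hae : AEMeasurable σsq μ := by
    refine aemeasurable_of_tendsto_metrizable_ae atTop (fun n : ℕ => ?_) hM'
    exact ((Finset.measurable_fun_sum _ fun k _ => (hd' k).pow_const 2).div_const _).aemeasurable
  obtain ⟨σ, hσ, hσe⟩ : ∃ σ : Ω → ℝ, Measurable σ ∧ σsq =ᵐ[μ] σ := ⟨hae.mk _, hae.measurable_mk, hae.ae_eq_mk⟩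
  have hτ : σsq =ᵐ[μ] fun ω => max (σ ω) 0 := by
    filter_upwards [hσe, hM'] with ω h1 h2
    rw [← h1, max_eq_left]
    exact ge_of_tendsto' h2 fun n =>
      div_nonneg (Finset.sum_nonneg fun _ _ => sq_nonneg _) (Nat.cast_nonneg n)
  have hτm : Measurable (fun ω => max (σ ω) 0) := hσ.max measurable_const
  have hMτ : ∀ᵐ ω ∂μ, Tendsto (fun n : ℕ => (∑ k ∈ Finset.range n, (d k ω) ^ 2) / n) atTop
      (nhds (max (σ ω) 0)) := by
    filter_upwards [hM', hτ] with ω h1 h2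
    rw [← h2]; exact h1
  intro H hH hH0 g
  have hCm : ∀ n, Measurable (C n) := fun n => by
    have : C n = fun ω => (∑ k ∈ Finset.range n, d k ω) / Real.sqrt n := funext (hCd n)
    rw [this]
    exact (hSm' n).div_const _
  have hfin := MCLT.stable_of_char μ hCm hτm (fun ω => le_max_right _ _) hH0 (fun t => by
    simp only [hCd]
    exact MCLT.char_limit μ hd hL2 h0 hK' hτm (fun ω => le_max_right _ _) hMτ hH t) g
  have hlast : ∫ ω, ∫ x, g x ∂(gaussianReal 0 (σsq ω).toNNReal) ∂μ[|H]
      = ∫ ω, ∫ x, g x ∂(gaussianReal 0 (max (σ ω) 0).toNNReal) ∂μ[|H] := by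
    refine integral_congr_ae ?_
    have hτ' := (cond_absolutelyContinuous (μ := μ) (s := H)).ae_le hτ
    filter_upwards [hτ'] with ω hω
    rw [hω]
  rw [hlast]
  exact hfin
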